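/- There exists a constant C > 0 such that for all integers N ≥ 1, all t ∈ [0,1], and all α with N^{−3/4} ≤ α ≤ 2/3: 1/C ≤ q_t^N(α) ≤ C, and |q_t^N(α) − (1 + α·(1−α)·f_t''(α))^{−1/2}| ≤ C/(N·α); here (1 + α·(1−α)·f_t''(α))^{−1/2} = (G_P''(α)/G_t''(α))^{1/2}. -/

import Mathlib

open Set Filter

noncomputable def GP : ℝ → ℝ := fun x => x * Real.log x + (1 - x) * Real.log (1 - x)

noncomputable def Gt (f0 f1 : ℝ → ℝ) (t : ℝ) : ℝ → ℝ :=
  fun x => GP x + ((1 - t) * f0 x + t * f1 x)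

noncomputable def Phase (G : ℝ → ℝ) (α : ℝ) : ℝ → ℝ :=
  fun x => (x - α) * deriv G x - (G x - G α)

noncomputable def Qnorm (G : ℝ → ℝ) (N : ℕ) (α : ℝ) : ℝ :=
  2 * Real.pi * ∫ x in (0:ℝ)..1, Real.exp (-(N : ℝ) * Phase G α x)

noncomputable def RPhase (G : ℝ → ℝ) (α : ℝ) : ℝ → ℝ :=
  fun y => (1 / α) * Phase G α (α * (1 + y))

noncomputable def Leg (G : ℝ → ℝ) (S : Set ℝ) : ℝ → ℝ :=
  fun ρ => sSup ((fun x => x * ρ - G x) '' S)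

noncomputable def QQ (G : ℝ → ℝ) (N : ℕ) (α : ℝ) : ℝ :=
  Qnorm G N α * Real.exp ((N : ℝ) * G α)

/-!
Join `G_P` to `G_P + f` by `G = G_P + s f`, `0 ≤ s ≤ 1`. Up to a constant factor `e ^ (-N F)` is
`W x = x ^ (N α) (1 - x) ^ (N (1 - α)) e ^ (-N s φ x)`, where `φ` is the phase of `f`, so the
logarithmic derivative of the integral in `s` is `-N ∫ φ W / ∫ W`. Now `φ` is `(x - α)²` times a
`C²` function, and `W' = -N (x - α) G'' W`. Since `p = 1 / G''` is smooth on `[0, 1]` and vanishes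
at both ends, two integrations by parts against `p W` evaluate `N ∫ φ W / ∫ W` as
`f''(α) p(α) / 2 + O(1 / N)`, uniformly up to the end points, with no change of scale there. The
main term is half the logarithmic derivative of `1 + s α (1 - α) f''(α)`; integrate over `s` and
exponentiate.
-/

section C2Bounds

/-- `f` is of class `C²` around every point of `S`, and `|f|`, `|f'|`, `|f''|` are at most `B`
on `S`. The bound is part of the notion so that estimates can be made uniform over families of
functions. -/
structure C2BoundedOn (S : Set ℝ) (B : ℝ) (f : ℝ → ℝ) : Prop where
  contDiffAt : ∀ x ∈ S, ContDiffAt ℝ 2 f x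
  abs_iteratedDeriv_le : ∀ x ∈ S, ∀ i ≤ 2, |iteratedDeriv i f x| ≤ B

namespace C2BoundedOn

variable {S : Set ℝ} {A B c x : ℝ} {f g : ℝ → ℝ}

lemma abs_le (hf : C2BoundedOn S B f) (hx : x ∈ S) : |f x| ≤ B := by
  simpa using hf.abs_iteratedDeriv_le x hx 0 zero_le_two

lemma abs_deriv_le (hf : C2BoundedOn S B f) (hx : x ∈ S) : |deriv f x| ≤ B := by
  simpa using hf.abs_iteratedDeriv_le x hx 1 one_le_two

lemma abs_deriv_deriv_le (hf : C2BoundedOn S B f) (hx : x ∈ S) : |deriv (deriv f) x| ≤ B := by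
  simpa [iteratedDeriv_succ] using hf.abs_iteratedDeriv_le x hx 2 le_rfl

lemma bound_nonneg (hf : C2BoundedOn S B f) (hx : x ∈ S) : 0 ≤ B :=
  (abs_nonneg _).trans (hf.abs_le hx)

lemma contDiffAt_one (hf : C2BoundedOn S B f) (hx : x ∈ S) : ContDiffAt ℝ 1 f x :=
  (hf.contDiffAt x hx).of_le one_le_two

lemma contDiffAt_deriv (hf : C2BoundedOn S B f) (hx : x ∈ S) : ContDiffAt ℝ 1 (deriv f) x :=
  (hf.contDiffAt x hx).derivWithin (by norm_num)

lemma differentiableAt (hf : C2BoundedOn S B f) (hx : x ∈ S) : DifferentiableAt ℝ f x :=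
  (hf.contDiffAt_one hx).differentiableAt one_ne_zero

lemma differentiableAt_deriv (hf : C2BoundedOn S B f) (hx : x ∈ S) :
    DifferentiableAt ℝ (deriv f) x :=
  (hf.contDiffAt_deriv hx).differentiableAt one_ne_zero

lemma continuousOn (hf : C2BoundedOn S B f) : ContinuousOn f S :=
  fun _ hx => (hf.differentiableAt hx).continuousAt.continuousWithinAt

lemma continuousOn_deriv (hf : C2BoundedOn S B f) : ContinuousOn (deriv f) S :=
  fun _ hx => (hf.differentiableAt_deriv hx).continuousAt.continuousWithinAt

lemma mono (hf : C2BoundedOn S A f) (hAB : A ≤ B) : C2BoundedOn S B f where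
  contDiffAt := hf.contDiffAt
  abs_iteratedDeriv_le x hx i hi := (hf.abs_iteratedDeriv_le x hx i hi).trans hAB

lemma add (hf : C2BoundedOn S A f) (hg : C2BoundedOn S B g) :
    C2BoundedOn S (A + B) (fun x => f x + g x) where
  contDiffAt x hx := (hf.contDiffAt x hx).add (hg.contDiffAt x hx)
  abs_iteratedDeriv_le x hx i hi := by
    have hi' : (i : WithTop ℕ∞) ≤ 2 := by exact_mod_cast hi
    rw [iteratedDeriv_fun_add ((hf.contDiffAt x hx).of_le hi') ((hg.contDiffAt x hx).of_le hi')]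
    exact (abs_add_le _ _).trans
      (add_le_add (hf.abs_iteratedDeriv_le x hx i hi) (hg.abs_iteratedDeriv_le x hx i hi))

lemma const (S : Set ℝ) (c : ℝ) : C2BoundedOn S |c| (fun _ => c) where
  contDiffAt _ _ := contDiffAt_const
  abs_iteratedDeriv_le x _ i _ := by
    rw [iteratedDeriv_const]
    split_ifs <;> simp

lemma const_mul (c : ℝ) (hf : C2BoundedOn S B f) :
    C2BoundedOn S (|c| * B) (fun x => c * f x) where
  contDiffAt x hx := contDiffAt_const.mul (hf.contDiffAt x hx)
  abs_iteratedDeriv_le x hx i hi := by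
    rw [iteratedDeriv_const_mul_field, abs_mul]
    exact mul_le_mul_of_nonneg_left (hf.abs_iteratedDeriv_le x hx i hi) (abs_nonneg c)

lemma mul (hf : C2BoundedOn S A f) (hg : C2BoundedOn S B g) :
    C2BoundedOn S (4 * (A * B)) (fun x => f x * g x) where
  contDiffAt x hx := (hf.contDiffAt x hx).mul (hg.contDiffAt x hx)
  abs_iteratedDeriv_le x hx i hi := by
    have hi' : (i : WithTop ℕ∞) ≤ 2 := by exact_mod_cast hi
    have hA := hf.bound_nonneg hx
    have hB := hg.bound_nonneg hx
    rw [iteratedDeriv_fun_mul ((hf.contDiffAt x hx).of_le hi') ((hg.contDiffAt x hx).of_le hi')]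
    calc |∑ j ∈ Finset.range (i + 1),
            i.choose j * iteratedDeriv j f x * iteratedDeriv (i - j) g x|
        ≤ ∑ j ∈ Finset.range (i + 1), (i.choose j : ℝ) * (A * B) := by
          refine (Finset.abs_sum_le_sum_abs _ _).trans (Finset.sum_le_sum fun j hj => ?_)
          have hf' := hf.abs_iteratedDeriv_le x hx j (by grind)
          have hg' := hg.abs_iteratedDeriv_le x hx (i - j) (by lia)
          rw [abs_mul, abs_mul, Nat.abs_cast, mul_assoc]
          gcongr
      _ = 2 ^ i * (A * B) := by
          rw [← Finset.sum_mul, ← Nat.cast_sum, Nat.sum_range_choose]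
          norm_cast
      _ ≤ 2 ^ 2 * (A * B) := by gcongr; exact one_le_two
      _ = 4 * (A * B) := by norm_num

lemma inv (hf : C2BoundedOn S B f) (hc : 0 < c) (hcf : ∀ x ∈ S, c ≤ f x) :
    C2BoundedOn S (c⁻¹ + B * c⁻¹ ^ 2 + 2 * B ^ 2 * c⁻¹ ^ 3) (fun x => (f x)⁻¹) where
  contDiffAt x hx := (hf.contDiffAt x hx).inv (hc.trans_le (hcf x hx)).ne'
  abs_iteratedDeriv_le x hx i hi := by
    have hfx : 0 < f x := hc.trans_le (hcf x hx)
    have hB := hf.bound_nonneg hx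
    have h1 := hf.abs_deriv_le hx
    have h2 := hf.abs_deriv_deriv_le hx
    have hr : (f x)⁻¹ ≤ c⁻¹ := inv_anti₀ hc (hcf x hx)
    have hr0 : 0 < (f x)⁻¹ := inv_pos.2 hfx
    have hB1 : 0 ≤ B * c⁻¹ ^ 2 := by positivity
    have hB2 : 0 ≤ 2 * B ^ 2 * c⁻¹ ^ 3 := by positivity
    interval_cases i
    · rw [iteratedDeriv_zero, abs_of_pos hr0]
      linarith
    · have : |deriv f x| * (f x)⁻¹ ^ 2 ≤ B * c⁻¹ ^ 2 := by gcongr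
      rw [iteratedDeriv_one, deriv_fun_inv'' (hf.differentiableAt hx) hfx.ne', neg_div, abs_neg,
        div_eq_mul_inv, ← inv_pow, abs_mul, abs_of_pos (by positivity : 0 < (f x)⁻¹ ^ 2)]
      linarith
    · have hinv : iteratedDeriv 2 (fun y : ℝ => y⁻¹) (f x) = 2 * (f x)⁻¹ ^ 3 := by
        rw [iteratedDeriv_eq_iterate, iter_deriv_inv]
        norm_num [zpow_neg, ← inv_zpow]
      have hcomp := iteratedDeriv_comp_two (g := fun y : ℝ => y⁻¹)
        (contDiffAt_id.inv hfx.ne') (hf.contDiffAt x hx)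
      simp only [Function.comp_def, hinv, deriv_inv] at hcomp
      rw [hcomp, iteratedDeriv_succ, iteratedDeriv_one, ← inv_pow]
      calc _ ≤ 2 * (f x)⁻¹ ^ 3 * |deriv f x| ^ 2 + (f x)⁻¹ ^ 2 * |deriv (deriv f) x| := by
            refine (abs_add_le _ _).trans (le_of_eq ?_)
            simp only [abs_mul, abs_neg, abs_pow, abs_two, abs_of_pos hr0]
        _ ≤ 2 * c⁻¹ ^ 3 * B ^ 2 + c⁻¹ ^ 2 * B := by gcongr
        _ ≤ _ := by linarith

lemma abs_sub_taylor_le {a b y : ℝ} (hf : C2BoundedOn (Icc a b) B f) (hy : y ∈ Icc a b)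
    (hx : x ∈ Icc a b) : |f x - f y - deriv f y * (x - y)| ≤ B * (x - y) ^ 2 := by
  have hsub : uIcc y x ⊆ Icc a b := ordConnected_Icc.uIcc_subset hy hx
  have hderiv : ∀ z ∈ uIcc y x, |deriv f z - deriv f y| ≤ B * |x - y| := fun z hz => by
    have hlip := (convex_Icc a b).norm_image_sub_le_of_norm_deriv_le (f := deriv f)
      (fun w hw => hf.differentiableAt_deriv hw) (fun w hw => hf.abs_deriv_deriv_le hw)
      hy (hsub hz)
    exact hlip.trans (mul_le_mul_of_nonneg_left (by simpa using abs_sub_left_of_mem_uIcc hz)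
      (hf.bound_nonneg hy))
  have hmvt := (convex_uIcc y x).norm_image_sub_le_of_norm_hasDerivWithin_le
    (f := fun z => f z - deriv f y * (z - y)) (f' := fun z => deriv f z - deriv f y)
    (fun z hz => by
      simpa using ((hf.differentiableAt (hsub hz)).hasDerivAt.fun_sub
        (((hasDerivAt_id z).sub_const y).const_mul (deriv f y))).hasDerivWithinAt)
    hderiv left_mem_uIcc right_mem_uIcc
  simpa [sub_right_comm, mul_assoc, ← pow_two] using hmvt

lemma exists_of_contDiff (hS : IsCompact S) (hf : ContDiff ℝ 2 f) : ∃ B, C2BoundedOn S B f := by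
  have hcont : ∀ i ∈ Finset.range 3, Continuous (iteratedDeriv i f) := fun i hi =>
    hf.continuous_iteratedDeriv i (by exact_mod_cast Nat.lt_succ_iff.1 (Finset.mem_range.1 hi))
  obtain ⟨B, hB⟩ := hS.bddAbove_image (f := fun x => ∑ i ∈ Finset.range 3, |iteratedDeriv i f x|)
    (continuous_finsetSum _ fun i hi => (hcont i hi).abs).continuousOn
  refine ⟨B, fun x _ => hf.contDiffAt, fun x hx i hi => ?_⟩
  exact (Finset.single_le_sum (fun j _ => abs_nonneg (iteratedDeriv j f x))
    (Finset.mem_range_succ_iff.2 hi)).trans (hB (mem_image_of_mem _ hx))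

end C2BoundedOn

end C2Bounds

section SegmentMoments

lemma hasDerivAt_intervalIntegral_of_continuous {E : Type*} [NormedAddCommGroup E]
    [NormedSpace ℝ E] {F F' : ℝ → ℝ → E} {a b s : ℝ} (hF : ∀ s, Continuous (F s))
    (hF' : Continuous (Function.uncurry F'))
    (hFF' : ∀ s x, HasDerivAt (fun s => F s x) (F' s x) s) :
    HasDerivAt (fun s => ∫ x in a..b, F s x) (∫ x in a..b, F' s x) s := by
  obtain ⟨C, hC⟩ := ((isCompact_closedBall s 1).prod
    (isCompact_uIcc (a := a) (b := b))).exists_bound_of_continuousOn hF'.continuousOn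
  refine (intervalIntegral.hasDerivAt_integral_of_dominated_loc_of_deriv_le
    (bound := fun _ => C) (Metric.closedBall_mem_nhds s one_pos)
    (Eventually.of_forall fun s => ?_) ?_ ?_ (Eventually.of_forall fun x hx s hs => ?_)
    intervalIntegrable_const (Eventually.of_forall fun x _ s _ => hFF' s x)).2
  · exact (hF s).aestronglyMeasurable
  · exact (hF s).intervalIntegrable a b
  · exact (hF'.uncurry_left s).aestronglyMeasurable
  · exact hC (s, x) ⟨hs, uIoc_subset_uIcc hx⟩

/-- The `n`-th moment `∫₀¹ uⁿ g(α + u (x - α)) du` of `g` along the segment from `α` to `x`, as a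
function of `x`. It is the smooth quotient in Taylor's formula with integral remainder. -/
noncomputable def segmentMoment (n : ℕ) (g : ℝ → ℝ) (α x : ℝ) : ℝ :=
  ∫ u in (0 : ℝ)..1, u ^ n * g (α + u * (x - α))

variable {n : ℕ} {g : ℝ → ℝ} {α x K : ℝ}

lemma hasDerivAt_segmentMoment (hg : ContDiff ℝ 1 g) :
    HasDerivAt (segmentMoment n g α) (segmentMoment (n + 1) (deriv g) α x) x := by
  have : Continuous (deriv g) := hg.continuous_deriv_one
  have hgc := hg.continuous
  refine hasDerivAt_intervalIntegral_of_continuous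
    (F := fun y u => u ^ n * g (α + u * (y - α)))
    (F' := fun y u => u ^ (n + 1) * deriv g (α + u * (y - α)))
    (fun y => by fun_prop) (by unfold Function.uncurry; fun_prop) fun y u => ?_
  have hinner : HasDerivAt (fun y => α + u * (y - α)) u y := by
    simpa using (((hasDerivAt_id' y).sub_const α).const_mul u).const_add α
  have hcomp := (hg.differentiable one_ne_zero).differentiableAt.hasDerivAt.comp y hinner
  exact (hcomp.const_mul (u ^ n)).congr_deriv (by ring)

lemma deriv_segmentMoment (hg : ContDiff ℝ 1 g) :
    deriv (segmentMoment n g α) = segmentMoment (n + 1) (deriv g) α :=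
  funext fun _ => (hasDerivAt_segmentMoment hg).deriv

lemma continuous_segmentMoment (hg : Continuous g) : Continuous (segmentMoment n g α) :=
  intervalIntegral.continuous_parametric_intervalIntegral_of_continuous'
    (by unfold Function.uncurry; fun_prop) 0 1

lemma contDiff_segmentMoment {m : ℕ} (hg : ContDiff ℝ m g) :
    ContDiff ℝ m (segmentMoment n g α) := by
  induction m generalizing n g with
  | zero => exact contDiff_zero.2 (continuous_segmentMoment hg.continuous)
  | succ m ih =>
    push_cast at hg ⊢
    have hg1 : ContDiff ℝ 1 g := hg.of_le (by simp)
    refine contDiff_succ_iff_deriv.2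
      ⟨fun x => (hasDerivAt_segmentMoment hg1).differentiableAt, by simp, ?_⟩
    rw [deriv_segmentMoment hg1]
    exact ih (contDiff_succ_iff_deriv.1 hg).2.2

lemma iteratedDeriv_segmentMoment {m : ℕ} (hg : ContDiff ℝ m g) :
    iteratedDeriv m (segmentMoment n g α) = segmentMoment (n + m) (iteratedDeriv m g) α := by
  induction m generalizing n g with
  | zero => simp
  | succ m ih =>
    push_cast at hg
    rw [iteratedDeriv_succ', deriv_segmentMoment (hg.of_le (by simp)),
      ih (contDiff_succ_iff_deriv.1 hg).2.2, iteratedDeriv_succ']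
    congr 1
    lia

lemma segmentMoment_self : segmentMoment n g α α = g α / (n + 1) := by
  simp [segmentMoment, div_eq_inv_mul]

lemma abs_segmentMoment_le {S : Set ℝ} (hS : Convex ℝ S) (hα : α ∈ S) (hx : x ∈ S)
    (hg : ∀ y ∈ S, |g y| ≤ K) : |segmentMoment n g α x| ≤ K := by
  suffices h : ∀ u ∈ uIoc (0 : ℝ) 1, ‖u ^ n * g (α + u * (x - α))‖ ≤ K by
    simpa [segmentMoment] using intervalIntegral.norm_integral_le_of_norm_le_const h
  intro u hu
  rw [uIoc_of_le zero_le_one] at hu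
  rw [norm_mul, norm_pow, Real.norm_of_nonneg hu.1.le]
  calc u ^ n * ‖g (α + u * (x - α))‖ ≤ 1 * K := by
        gcongr
        · exact pow_le_one₀ hu.1.le hu.2
        · exact hg _ (hS.add_smul_sub_mem hα hx ⟨hu.1.le, hu.2⟩)
    _ = K := one_mul K

lemma C2BoundedOn.segmentMoment {S : Set ℝ} (hg : ContDiff ℝ 2 g) (hgK : C2BoundedOn S K g)
    (hS : Convex ℝ S) (hα : α ∈ S) : C2BoundedOn S K (segmentMoment n g α) where
  contDiffAt _ _ := (contDiff_segmentMoment (m := 2) hg).contDiffAt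
  abs_iteratedDeriv_le x hx i hi := by
    rw [iteratedDeriv_segmentMoment (hg.of_le (by exact_mod_cast hi))]
    exact abs_segmentMoment_le hS hα hx fun y hy => hgK.abs_iteratedDeriv_le y hy i hi

/-- The phase is `(x - α)²` times a function as smooth as `f''`: differentiate
`u ↦ u (x - α) f'(α + u (x - α)) - f (α + u (x - α))` and integrate over `[0, 1]`. -/
lemma Phase_eq_sq_mul_segmentMoment {f : ℝ → ℝ} (hf : ContDiff ℝ 2 f) (α x : ℝ) :
    Phase f α x = (x - α) ^ 2 * segmentMoment 1 (iteratedDeriv 2 f) α x := by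
  have hf' : ContDiff ℝ 1 (deriv f) := (contDiff_succ_iff_deriv (n := 1)).1 hf |>.2.2
  have : Continuous (deriv (deriv f)) := hf'.continuous_deriv_one
  have hinner (u : ℝ) : HasDerivAt (fun u => α + u * (x - α)) (x - α) u := by
    simpa using ((hasDerivAt_id' u).mul_const (x - α)).const_add α
  have hprim (u : ℝ) : HasDerivAt
      (fun u => u * (x - α) * deriv f (α + u * (x - α)) - f (α + u * (x - α)))
      ((x - α) ^ 2 * (u ^ 1 * deriv (deriv f) (α + u * (x - α)))) u := by
    have h1 := (hf'.differentiable one_ne_zero).differentiableAt.hasDerivAt.comp u (hinner u)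
    have h0 := (hf.differentiable two_ne_zero).differentiableAt.hasDerivAt.comp u (hinner u)
    exact ((((hasDerivAt_id' u).mul_const (x - α)).mul h1).sub h0).congr_deriv
      (by simp only [Function.comp_apply]; ring)
  have hFTC := intervalIntegral.integral_eq_sub_of_hasDerivAt (a := 0) (b := 1)
    (fun u _ => hprim u) (by apply Continuous.intervalIntegrable; fun_prop)
  rw [intervalIntegral.integral_const_mul] at hFTC
  simp only [segmentMoment, iteratedDeriv_succ, iteratedDeriv_zero, hFTC, Phase, one_mul,
    add_sub_cancel, zero_mul, add_zero, zero_sub, sub_neg_eq_add]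
  ring

end SegmentMoments

section SteinWeights

/-- `W` is a nonnegative weight on `[a, b]` for which `p / N` is a Stein kernel centred at `α`:
since `p W' = -N (x - α) W` and `p` vanishes at both ends, integration by parts trades a factor
`N (x - α)` for a derivative. -/
structure IsSteinWeight (a b N α : ℝ) (p W : ℝ → ℝ) : Prop where
  continuousOn : ContinuousOn W (Icc a b)
  nonneg : ∀ x ∈ Icc a b, 0 ≤ W x
  differentiableAt : ∀ x ∈ Ioo a b, DifferentiableAt ℝ W x
  mul_deriv : ∀ x ∈ Ioo a b, p x * deriv W x = -N * (x - α) * W x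
  left_eq_zero : p a = 0
  right_eq_zero : p b = 0

namespace IsSteinWeight

variable {a b N α B H K : ℝ} {p W g h k : ℝ → ℝ}

lemma intervalIntegrable (hW : IsSteinWeight a b N α p W) (hab : a ≤ b)
    (hg : ContinuousOn g (Icc a b)) :
    IntervalIntegrable (fun x => g x * W x) MeasureTheory.volume a b :=
  ((hg.mul hW.continuousOn).mono (uIcc_of_le hab).subset).intervalIntegrable

lemma abs_integral_mul_le (hW : IsSteinWeight a b N α p W) (hab : a ≤ b)
    (hk : ContinuousOn k (Icc a b)) (hgk : ∀ x ∈ Icc a b, |g x| ≤ k x) :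
    |∫ x in a..b, g x * W x| ≤ ∫ x in a..b, k x * W x := by
  rw [← Real.norm_eq_abs]
  refine intervalIntegral.norm_integral_le_of_norm_le hab
    (Eventually.of_forall fun x hx => ?_) (hW.intervalIntegrable hab hk)
  have hx' := Ioc_subset_Icc_self hx
  rw [norm_mul, Real.norm_of_nonneg (hW.nonneg x hx')]
  exact mul_le_mul_of_nonneg_right (hgk x hx') (hW.nonneg x hx')

lemma abs_integral_mul_le_mul (hW : IsSteinWeight a b N α p W) (hab : a ≤ b)
    (hg : ∀ x ∈ Icc a b, |g x| ≤ K) :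
    |∫ x in a..b, g x * W x| ≤ K * ∫ x in a..b, W x := by
  simpa using hW.abs_integral_mul_le hab continuousOn_const hg

theorem mul_integral_sub_mul (hW : IsSteinWeight a b N α p W) (hab : a ≤ b)
    (hp : ∀ x ∈ Icc a b, ContDiffAt ℝ 1 p x) (hg : ∀ x ∈ Icc a b, ContDiffAt ℝ 1 g x) :
    N * ∫ x in a..b, (x - α) * g x * W x = ∫ x in a..b, deriv (fun x => g x * p x) x * W x := by
  have hgp : ∀ x ∈ Icc a b, ContDiffAt ℝ 1 (fun x => g x * p x) x := fun x hx =>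
    (hg x hx).mul (hp x hx)
  have hgc : ContinuousOn g (Icc a b) := fun x hx => (hg x hx).continuousAt.continuousWithinAt
  have hgpc : ContinuousOn (fun x => g x * p x) (Icc a b) := fun x hx =>
    (hgp x hx).continuousAt.continuousWithinAt
  have hgp' : ContinuousOn (deriv fun x => g x * p x) (Icc a b) := fun x hx =>
    ((hgp x hx).derivWithin (m := 0) (by simp)).continuousAt.continuousWithinAt
  have hleft := hW.intervalIntegrable (g := fun x => N * ((x - α) * g x)) hab (by fun_prop)
  have hright := hW.intervalIntegrable hab hgp'
  have hderiv : ∀ x ∈ Ioo a b, HasDerivAt (fun x => g x * p x * W x)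
      (deriv (fun x => g x * p x) x * W x - N * ((x - α) * g x) * W x) x := fun x hx =>
    (((hgp x (Ioo_subset_Icc_self hx)).differentiableAt one_ne_zero).hasDerivAt.fun_mul
      (hW.differentiableAt x hx).hasDerivAt).congr_deriv
        (by linear_combination g x * hW.mul_deriv x hx)
  have hFTC := intervalIntegral.integral_eq_sub_of_hasDerivAt_of_le hab
    (hgpc.fun_mul hW.continuousOn) hderiv (hright.sub hleft)
  simp only [hW.left_eq_zero, hW.right_eq_zero, mul_zero, zero_mul, sub_zero] at hFTC
  rw [intervalIntegral.integral_sub hright hleft, sub_eq_zero] at hFTC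
  simp only [hFTC, mul_assoc, intervalIntegral.integral_const_mul]

lemma mul_integral_sub_sq_le (hW : IsSteinWeight a b N α p W) (hp : C2BoundedOn (Icc a b) B p)
    (hα : α ∈ Icc a b) :
    N * ∫ x in a..b, (x - α) ^ 2 * W x ≤ (1 + (b - a)) * B * ∫ x in a..b, W x := by
  have hab := hα.1.trans hα.2
  have hstein := hW.mul_integral_sub_mul hab (fun x hx => hp.contDiffAt_one hx)
    (g := fun x => x - α) fun x _ => by fun_prop
  simp only [← pow_two] at hstein
  rw [hstein]
  refine (le_abs_self _).trans (hW.abs_integral_mul_le_mul hab fun x hx => ?_)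
  rw [(((hasDerivAt_id' x).sub_const α).fun_mul (hp.differentiableAt hx).hasDerivAt).deriv]
  calc |1 * p x + (x - α) * deriv p x| ≤ |p x| + |x - α| * |deriv p x| := by
        rw [one_mul, ← abs_mul]
        exact abs_add_le _ _
    _ ≤ B + (b - a) * B := by
        gcongr
        · exact hp.abs_le hx
        · exact abs_sub_le_of_le_of_le hx.1 hx.2 hα.1 hα.2
        · exact hp.abs_deriv_le hx
    _ = (1 + (b - a)) * B := by ring

/-- `W dx` concentrates at `α` at scale `N ^ (-1/2)`. The linear Taylor term of `h` contributes at
order `1 / N` too, since the Stein identity with `g = 1` controls the first moment. -/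
theorem abs_mul_integral_sub_le (hW : IsSteinWeight a b N α p W) (hN : 0 ≤ N)
    (hp : C2BoundedOn (Icc a b) B p) (hh : C2BoundedOn (Icc a b) H h) (hα : α ∈ Icc a b) :
    |N * ((∫ x in a..b, h x * W x) - h α * ∫ x in a..b, W x)| ≤
      (2 + (b - a)) * (H * B) * ∫ x in a..b, W x := by
  have hab := hα.1.trans hα.2
  have hH := hh.bound_nonneg hα
  set J := ∫ x in a..b, W x
  have hfirst : |N * ∫ x in a..b, (x - α) * W x| ≤ B * J := by
    have hstein := hW.mul_integral_sub_mul hab (fun x hx => hp.contDiffAt_one hx)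
      (g := fun _ => 1) fun x _ => by fun_prop
    simp only [mul_one, one_mul] at hstein
    rw [hstein]
    exact hW.abs_integral_mul_le_mul hab fun x hx => hp.abs_deriv_le hx
  have hrem : |∫ x in a..b, (h x - h α - deriv h α * (x - α)) * W x| ≤
      H * ∫ x in a..b, (x - α) ^ 2 * W x := by
    simpa only [mul_assoc, intervalIntegral.integral_const_mul] using
      hW.abs_integral_mul_le hab (by fun_prop) fun x hx => hh.abs_sub_taylor_le hα hx
  have hsplit : (∫ x in a..b, h x * W x) - h α * J =
      (∫ x in a..b, (h x - h α - deriv h α * (x - α)) * W x) +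
        deriv h α * ∫ x in a..b, (x - α) * W x := by
    have hhc := hh.continuousOn
    have hint := hW.intervalIntegrable hab
      (g := fun x => h x - h α - deriv h α * (x - α)) (by fun_prop)
    have hint0 := hW.intervalIntegrable hab (g := fun _ => h α) (by fun_prop)
    have hint1 := hW.intervalIntegrable hab (g := fun x => deriv h α * (x - α)) (by fun_prop)
    rw [sub_eq_iff_eq_add, ← intervalIntegral.integral_const_mul,
      ← intervalIntegral.integral_const_mul]
    simp only [← mul_assoc]
    rw [← intervalIntegral.integral_add hint hint1,
      ← intervalIntegral.integral_add (hint.add hint1) hint0]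
    exact intervalIntegral.integral_congr fun x _ => by ring
  calc |N * ((∫ x in a..b, h x * W x) - h α * J)|
      ≤ N * |∫ x in a..b, (h x - h α - deriv h α * (x - α)) * W x| +
          |deriv h α| * |N * ∫ x in a..b, (x - α) * W x| := by
        rw [hsplit, mul_add, mul_left_comm N (deriv h α), ← abs_mul (deriv h α)]
        refine (abs_add_le _ _).trans ?_
        rw [abs_mul N, abs_of_nonneg hN]
    _ ≤ H * ((1 + (b - a)) * B * J) + H * (B * J) := by
        refine add_le_add ?_ (mul_le_mul (hh.abs_deriv_le hα) hfirst (abs_nonneg _) hH)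
        refine (mul_le_mul_of_nonneg_left hrem hN).trans ?_
        rw [mul_left_comm]
        exact mul_le_mul_of_nonneg_left (hW.mul_integral_sub_sq_le hp hα) hH
    _ = (2 + (b - a)) * (H * B) * J := by ring

/-- Applying the Stein identity twice removes both factors `x - α`; only `k p` evaluated at the
centre survives at leading order. -/
theorem abs_mul_integral_sub_sq_mul_le (hW : IsSteinWeight a b N α p W) (hN : 0 ≤ N)
    (hp : C2BoundedOn (Icc a b) B p) (hk : C2BoundedOn (Icc a b) K k) (hα : α ∈ Icc a b) :
    |N * (N * (∫ x in a..b, (x - α) ^ 2 * k x * W x) - k α * p α * ∫ x in a..b, W x)| ≤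
      (4 + (b - a)) * (4 * (K * B) * B) * ∫ x in a..b, W x := by
  have hab := hα.1.trans hα.2
  set h : ℝ → ℝ := fun x => k x * p x with hhdef
  have hh : C2BoundedOn (Icc a b) (4 * (K * B)) h := hk.mul hp
  have hpc : ∀ x ∈ Icc a b, ContDiffAt ℝ 1 p x := fun x hx => hp.contDiffAt_one hx
  have houter : N * (∫ x in a..b, (x - α) ^ 2 * k x * W x) =
      (∫ x in a..b, h x * W x) + ∫ x in a..b, (x - α) * deriv h x * W x := by
    have hderiv : EqOn (fun x => deriv (fun x => (x - α) * k x * p x) x * W x)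
        (fun x => h x * W x + (x - α) * deriv h x * W x) (uIcc a b) := fun x hx => by
      rw [uIcc_of_le hab] at hx
      have := (((hasDerivAt_id' x).sub_const α).fun_mul (hh.differentiableAt hx).hasDerivAt).deriv
      simp only [hhdef, ← mul_assoc] at this ⊢
      rw [this]
      ring
    have hstein := hW.mul_integral_sub_mul hab hpc (g := fun x => (x - α) * k x) fun x hx =>
      (by fun_prop : ContDiffAt ℝ 1 (fun x => x - α) x).mul (hk.contDiffAt_one hx)
    have hh'c := hh.continuousOn_deriv
    rw [← intervalIntegral.integral_add (hW.intervalIntegrable hab hh.continuousOn)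
      (hW.intervalIntegrable hab (g := fun x => (x - α) * deriv h x) (by fun_prop)),
      ← intervalIntegral.integral_congr hderiv]
    simpa only [← mul_assoc, ← pow_two] using hstein
  have hinner : |N * ∫ x in a..b, (x - α) * deriv h x * W x| ≤
      2 * (4 * (K * B) * B) * ∫ x in a..b, W x := by
    rw [hW.mul_integral_sub_mul hab hpc fun x hx => hh.contDiffAt_deriv hx]
    refine hW.abs_integral_mul_le_mul hab fun x hx => ?_
    rw [((hh.differentiableAt_deriv hx).hasDerivAt.fun_mul
      (hp.differentiableAt hx).hasDerivAt).deriv]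
    calc |deriv (deriv h) x * p x + deriv h x * deriv p x|
        ≤ |deriv (deriv h) x| * |p x| + |deriv h x| * |deriv p x| := by
          rw [← abs_mul, ← abs_mul]
          exact abs_add_le _ _
      _ ≤ 4 * (K * B) * B + 4 * (K * B) * B := by
          have hH := hh.bound_nonneg hx
          exact add_le_add
            (mul_le_mul (hh.abs_deriv_deriv_le hx) (hp.abs_le hx) (abs_nonneg _) hH)
            (mul_le_mul (hh.abs_deriv_le hx) (hp.abs_deriv_le hx) (abs_nonneg _) hH)
      _ = 2 * (4 * (K * B) * B) := by ring
  rw [houter, add_sub_right_comm, mul_add]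
  exact (abs_add_le _ _).trans
    ((add_le_add (hW.abs_mul_integral_sub_le hN hp hh hα) hinner).trans_eq (by ring))

end IsSteinWeight

end SteinWeights

section BernsteinWeights

/-- The ratio of the second derivatives of `G_P + s f` and of `G_P`, where `g = f''` and
`G_P'' = 1 / (x (1 - x))`; it is regular up to the end points of `[0, 1]`. -/
def hessianRatio (g : ℝ → ℝ) (s x : ℝ) : ℝ :=
  1 + s * (x * (1 - x) * g x)

/-- The reciprocal of the second derivative of `G_P + s f`, where `g = f''`, extended by `0` to the
end points of `[0, 1]`. It is the Stein kernel of the weight `e ^ (-N F)` for this potential. -/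
noncomputable def invHessian (g : ℝ → ℝ) (s x : ℝ) : ℝ :=
  x * (1 - x) * (hessianRatio g s x)⁻¹

/-- The weight `x ^ (N α) (1 - x) ^ (N (1 - α)) e ^ (-N s φ)`, an exponential perturbation of a beta
density. With `φ` the phase of `f` it is `e ^ (-N F)` up to a constant factor, `F` being the phase
of `G_P + s f`. -/
noncomputable def bernsteinWeight (N α : ℝ) (φ : ℝ → ℝ) (s x : ℝ) : ℝ :=
  x ^ (N * α) * (1 - x) ^ (N * (1 - α)) * Real.exp (-N * s * φ x)

variable {N α K B c s x : ℝ} {f g φ : ℝ → ℝ}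

lemma hessianRatio_zero_left (g : ℝ → ℝ) (x : ℝ) : hessianRatio g 0 x = 1 := by
  simp [hessianRatio]

lemma hessianRatio_one_left (g : ℝ → ℝ) (x : ℝ) :
    hessianRatio g 1 x = 1 + x * (1 - x) * g x := by
  rw [hessianRatio, one_mul]

lemma min_one_le_hessianRatio (hs : s ∈ Icc (0 : ℝ) 1) (g : ℝ → ℝ) (x : ℝ) :
    min 1 (hessianRatio g 1 x) ≤ hessianRatio g s x := by
  calc min 1 (hessianRatio g 1 x)
      = (1 - s) * min 1 (hessianRatio g 1 x) + s * min 1 (hessianRatio g 1 x) := by ring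
    _ ≤ (1 - s) * 1 + s * hessianRatio g 1 x := by
        gcongr
        · exact sub_nonneg.2 hs.2
        · exact min_le_left _ _
        · exact hs.1
        · exact min_le_right _ _
    _ = hessianRatio g s x := by simp only [hessianRatio]; ring

lemma hasDerivAt_hessianRatio (g : ℝ → ℝ) (s x : ℝ) :
    HasDerivAt (fun s => hessianRatio g s x) (x * (1 - x) * g x) s :=
  (((hasDerivAt_id' s).mul_const _).const_add 1).congr_deriv (one_mul _)

lemma C2BoundedOn.mul_one_sub : C2BoundedOn (Icc 0 1) 2 fun x => x * (1 - x) where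
  contDiffAt x _ := by fun_prop
  abs_iteratedDeriv_le x hx i hi := by
    have h1 : deriv (fun x : ℝ => x * (1 - x)) = fun x => 1 - 2 * x := funext fun x =>
      (((hasDerivAt_id' x).fun_mul ((hasDerivAt_id' x).const_sub 1)).congr_deriv (by ring)).deriv
    have h2 : deriv (fun x : ℝ => 1 - 2 * x) x = -2 :=
      ((((hasDerivAt_id' x).const_mul 2).const_sub 1).congr_deriv (by ring)).deriv
    obtain ⟨hx0, hx1⟩ := hx
    interval_cases i
    · rw [iteratedDeriv_zero, _root_.abs_le]
      constructor <;> nlinarith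
    · rw [iteratedDeriv_one, h1, _root_.abs_le]
      constructor <;> linarith
    · rw [iteratedDeriv_succ, iteratedDeriv_one, h1, h2]
      norm_num

lemma C2BoundedOn.hessianRatio (hg : C2BoundedOn (Icc 0 1) K g) (hs : s ∈ Icc (0 : ℝ) 1) :
    C2BoundedOn (Icc 0 1) (1 + 8 * K) (hessianRatio g s) := by
  have hK : 0 ≤ K := hg.bound_nonneg (x := 0) (by simp)
  refine ((const _ 1).add ((mul_one_sub.mul hg).const_mul s)).mono ?_
  rw [abs_one, abs_of_nonneg hs.1]
  nlinarith [mul_le_mul_of_nonneg_right hs.2 hK]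

lemma exists_C2BoundedOn_invHessian (K : ℝ) (hc : 0 < c) :
    ∃ B, ∀ g, C2BoundedOn (Icc 0 1) K g → (∀ x ∈ Icc (0 : ℝ) 1, c ≤ hessianRatio g 1 x) →
      ∀ s ∈ Icc (0 : ℝ) 1, C2BoundedOn (Icc 0 1) B (invHessian g s) :=
  ⟨_, fun _ hg hcg _ hs => C2BoundedOn.mul_one_sub.mul
    ((hg.hessianRatio hs).inv (lt_min one_pos hc) fun x hx =>
      (min_le_min_left 1 (hcg x hx)).trans (min_one_le_hessianRatio hs _ x))⟩

lemma continuous_bernsteinWeight (hN : 0 ≤ N) (hα : α ∈ Icc (0 : ℝ) 1) (hφ : Continuous φ) :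
    Continuous (Function.uncurry (bernsteinWeight N α φ)) := by
  have hα0 : 0 ≤ N * α := mul_nonneg hN hα.1
  have hα1 : 0 ≤ N * (1 - α) := mul_nonneg hN (sub_nonneg.2 hα.2)
  unfold Function.uncurry bernsteinWeight
  fun_prop (disch := simp [*])

lemma bernsteinWeight_pos (hx : x ∈ Ioo (0 : ℝ) 1) : 0 < bernsteinWeight N α φ s x := by
  have hx1 : 0 < 1 - x := sub_pos.2 hx.2
  have hx0 := hx.1
  unfold bernsteinWeight
  positivity

lemma bernsteinWeight_nonneg (hx : x ∈ Icc (0 : ℝ) 1) : 0 ≤ bernsteinWeight N α φ s x := by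
  have hx1 : 0 ≤ 1 - x := sub_nonneg.2 hx.2
  have hx0 := hx.1
  unfold bernsteinWeight
  positivity

lemma integral_bernsteinWeight_pos (hN : 0 ≤ N) (hα : α ∈ Icc (0 : ℝ) 1) (hφ : Continuous φ) :
    0 < ∫ x in (0 : ℝ)..1, bernsteinWeight N α φ s x :=
  intervalIntegral.intervalIntegral_pos_of_pos_on
    (((continuous_bernsteinWeight hN hα hφ).uncurry_left s).intervalIntegrable 0 1)
    (fun _ hx => bernsteinWeight_pos hx) one_pos

lemma hasDerivAt_integral_bernsteinWeight (hN : 0 ≤ N) (hα : α ∈ Icc (0 : ℝ) 1)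
    (hφ : Continuous φ) :
    HasDerivAt (fun s => ∫ x in (0 : ℝ)..1, bernsteinWeight N α φ s x)
      (-N * ∫ x in (0 : ℝ)..1, φ x * bernsteinWeight N α φ s x) s := by
  have hW := continuous_bernsteinWeight hN hα hφ
  rw [← intervalIntegral.integral_const_mul]
  refine hasDerivAt_intervalIntegral_of_continuous
    (F' := fun s x => -N * (φ x * bernsteinWeight N α φ s x)) (fun s => hW.uncurry_left s)
    (continuous_const.mul ((hφ.comp continuous_snd).mul hW)) fun s x => ?_
  have hexp := (((hasDerivAt_id' s).const_mul (-N)).mul_const (φ x)).exp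
  exact (hexp.const_mul (x ^ (N * α) * (1 - x) ^ (N * (1 - α)))).congr_deriv
    (by simp only [bernsteinWeight]; ring)

lemma hasDerivAt_bernsteinWeight {φ' : ℝ} (hx : x ∈ Ioo (0 : ℝ) 1) (hφ : HasDerivAt φ φ' x) :
    HasDerivAt (bernsteinWeight N α φ s)
      (N * (α / x - (1 - α) / (1 - x) - s * φ') * bernsteinWeight N α φ s x) x := by
  have hx0 : x ≠ 0 := hx.1.ne'
  have hx1 : 1 - x ≠ 0 := (sub_pos.2 hx.2).ne'
  have hleft := (hasDerivAt_id' x).rpow_const (p := N * α) (.inl hx0)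
  have hright := ((hasDerivAt_id' x).const_sub 1).rpow_const (p := N * (1 - α)) (.inl hx1)
  refine ((hleft.fun_mul hright).fun_mul (hφ.const_mul (-N * s)).exp).congr_deriv ?_
  rw [Real.rpow_sub_one hx0, Real.rpow_sub_one hx1, bernsteinWeight]
  field_simp
  ring

lemma hasDerivAt_Phase {f'' : ℝ} (hf : DifferentiableAt ℝ f x) (hf' : HasDerivAt (deriv f) f'' x) :
    HasDerivAt (Phase f α) ((x - α) * f'') x :=
  ((((hasDerivAt_id' x).sub_const α).fun_mul hf').fun_sub
    (hf.hasDerivAt.sub_const (f α))).congr_deriv (by ring)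

lemma continuous_Phase (hf : ContDiff ℝ 1 f) : Continuous (Phase f α) := by
  have hfc := hf.continuous
  have : Continuous (deriv f) := hf.continuous_deriv_one
  unfold Phase
  fun_prop

lemma isSteinWeight_bernsteinWeight (hN : 0 ≤ N) (hα : α ∈ Icc (0 : ℝ) 1) (hf : ContDiff ℝ 2 f)
    (hpos : ∀ x ∈ Ioo (0 : ℝ) 1, 0 < hessianRatio (iteratedDeriv 2 f) s x) :
    IsSteinWeight 0 1 N α (invHessian (iteratedDeriv 2 f) s)
      (bernsteinWeight N α (Phase f α) s) := by
  have hf' : ContDiff ℝ 1 (deriv f) := (contDiff_succ_iff_deriv (n := 1)).1 hf |>.2.2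
  have hφ (x : ℝ) : HasDerivAt (Phase f α) ((x - α) * iteratedDeriv 2 f x) x := by
    rw [iteratedDeriv_succ, iteratedDeriv_one]
    exact hasDerivAt_Phase (hf.differentiable two_ne_zero x)
      (hf'.differentiable one_ne_zero x).hasDerivAt
  refine ⟨((continuous_bernsteinWeight hN hα (continuous_Phase (hf.of_le one_le_two))).uncurry_left
      s).continuousOn, fun x hx => bernsteinWeight_nonneg hx,
    fun x hx => (hasDerivAt_bernsteinWeight hx (hφ x)).differentiableAt, fun x hx => ?_,
    by simp [invHessian], by simp [invHessian]⟩
  have hx0 : x ≠ 0 := hx.1.ne'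
  have hx1 : 1 - x ≠ 0 := (sub_pos.2 hx.2).ne'
  have hr : hessianRatio (iteratedDeriv 2 f) s x ≠ 0 := (hpos x hx).ne'
  rw [(hasDerivAt_bernsteinWeight hx (hφ x)).deriv, invHessian]
  field_simp
  rw [hessianRatio]
  ring

lemma contDiff_iteratedDeriv_two {n : ℕ} (hf : ContDiff ℝ (n + 2) f) :
    ContDiff ℝ n (iteratedDeriv 2 f) := by
  rw [iteratedDeriv_eq_iterate]
  exact hf.iterate_deriv' n 2

/-- The Laplace estimate says that `hessianRatio ^ (-1/2)` and the integral have the same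
logarithmic derivative along `s ↦ G_P + s f`, up to `O(1 / N)`. -/
lemma abs_logDeriv_integral_bernsteinWeight_le (hN : 0 < N) (hα : α ∈ Icc (0 : ℝ) 1)
    (hf : ContDiff ℝ 4 f) (hK : C2BoundedOn (Icc 0 1) K (iteratedDeriv 2 f))
    (hpos : ∀ x ∈ Ioo (0 : ℝ) 1, 0 < hessianRatio (iteratedDeriv 2 f) s x)
    (hB : C2BoundedOn (Icc 0 1) B (invHessian (iteratedDeriv 2 f) s)) :
    |(-N * ∫ x in (0 : ℝ)..1, Phase f α x * bernsteinWeight N α (Phase f α) s x) /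
          (∫ x in (0 : ℝ)..1, bernsteinWeight N α (Phase f α) s x) +
        1 / 2 * (α * (1 - α) * iteratedDeriv 2 f α / hessianRatio (iteratedDeriv 2 f) s α)| ≤
      20 * (K * B ^ 2) / N := by
  have hf2 : ContDiff ℝ 2 f := hf.of_le (by norm_num)
  have hg := contDiff_iteratedDeriv_two (n := 2) (by norm_num; exact hf)
  set W := bernsteinWeight N α (Phase f α) s
  set J := ∫ x in (0 : ℝ)..1, W x
  have hJ : 0 < J := integral_bernsteinWeight_pos hN.le hα (continuous_Phase (hf2.of_le one_le_two))
  have hlaplace := (isSteinWeight_bernsteinWeight hN.le hα hf2 hpos).abs_mul_integral_sub_sq_mul_le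
    hN.le hB (hK.segmentMoment (n := 1) hg (convex_Icc 0 1) hα) hα
  simp only [← Phase_eq_sq_mul_segmentMoment hf2] at hlaplace
  rw [segmentMoment_self, abs_mul, abs_of_pos hN] at hlaplace
  have hscale : N * (∫ x in (0 : ℝ)..1, Phase f α x * W x) -
      iteratedDeriv 2 f α / ((1 : ℕ) + 1) * invHessian (iteratedDeriv 2 f) s α * J =
      -(((-N * ∫ x in (0 : ℝ)..1, Phase f α x * W x) / J + 1 / 2 * (α * (1 - α) *
        iteratedDeriv 2 f α / hessianRatio (iteratedDeriv 2 f) s α)) * J) := by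
    rw [invHessian]
    field_simp
    norm_num
    ring
  rw [hscale, abs_neg, abs_mul, abs_of_pos hJ] at hlaplace
  rw [le_div_iff₀ hN, ← mul_le_mul_iff_of_pos_right hJ]
  linarith

theorem abs_log_integral_bernsteinWeight_add_le (hN : 0 < N) (hα : α ∈ Icc (0 : ℝ) 1)
    (hf : ContDiff ℝ 4 f) (hK : C2BoundedOn (Icc 0 1) K (iteratedDeriv 2 f))
    (hpos : ∀ x ∈ Icc (0 : ℝ) 1, 0 < hessianRatio (iteratedDeriv 2 f) 1 x)
    (hB : ∀ s ∈ Icc (0 : ℝ) 1, C2BoundedOn (Icc 0 1) B (invHessian (iteratedDeriv 2 f) s)) :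
    |Real.log (∫ x in (0 : ℝ)..1, bernsteinWeight N α (Phase f α) 1 x) -
        Real.log (∫ x in (0 : ℝ)..1, bernsteinWeight N α (Phase f α) 0 x) +
        1 / 2 * Real.log (hessianRatio (iteratedDeriv 2 f) 1 α)| ≤ 20 * (K * B ^ 2) / N := by
  have hφ : Continuous (Phase f α) := continuous_Phase (hf.of_le (by norm_num))
  have hpos' : ∀ s ∈ Icc (0 : ℝ) 1, ∀ x ∈ Icc (0 : ℝ) 1,
      0 < hessianRatio (iteratedDeriv 2 f) s x := fun s hs x hx =>
    (lt_min one_pos (hpos x hx)).trans_le (min_one_le_hessianRatio hs _ x)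
  have hderiv : ∀ s ∈ Icc (0 : ℝ) 1, HasDerivAt
      (fun s => Real.log (∫ x in (0 : ℝ)..1, bernsteinWeight N α (Phase f α) s x) +
        1 / 2 * Real.log (hessianRatio (iteratedDeriv 2 f) s α)) _ s := fun s hs =>
    ((hasDerivAt_integral_bernsteinWeight hN.le hα hφ).log
      (integral_bernsteinWeight_pos hN.le hα hφ).ne').add
      (((hasDerivAt_hessianRatio _ s α).log (hpos' s hs α hα).ne').const_mul (1 / 2))
  have hmvt := (convex_Icc (0 : ℝ) 1).norm_image_sub_le_of_norm_hasDerivWithin_le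
    (fun s hs => (hderiv s hs).hasDerivWithinAt) (fun s hs =>
      abs_logDeriv_integral_bernsteinWeight_le hN hα hf hK
        (fun x hx => hpos' s hs x (Ioo_subset_Icc_self hx)) (hB s hs))
    (left_mem_Icc.2 zero_le_one) (right_mem_Icc.2 zero_le_one)
  simpa [hessianRatio_zero_left, add_sub_right_comm] using hmvt

end BernsteinWeights

section EntropyPotential

variable {f : ℝ → ℝ} {x : ℝ}

lemma GP_eq_neg_binEntropy : GP = fun x => -Real.binEntropy x := by
  funext x
  simp only [GP, Real.binEntropy, Real.log_inv]
  ring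

lemma contDiffAt_GP {n : WithTop ℕ∞} (hx : x ∈ Ioo (0 : ℝ) 1) : ContDiffAt ℝ n GP x := by
  have hx0 : x ≠ 0 := hx.1.ne'
  have hx1 : 1 - x ≠ 0 := (sub_pos.2 hx.2).ne'
  unfold GP
  fun_prop (disch := assumption)

lemma deriv_GP (x : ℝ) : deriv GP x = Real.log x - Real.log (1 - x) := by
  rw [GP_eq_neg_binEntropy, deriv.fun_neg, Real.deriv_binEntropy, neg_sub]

lemma iteratedDeriv_two_GP (x : ℝ) : iteratedDeriv 2 GP x = 1 / (x * (1 - x)) := by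
  rw [GP_eq_neg_binEntropy, iteratedDeriv_fun_neg, iteratedDeriv_eq_iterate,
    Real.deriv2_binEntropy, neg_div, neg_neg]

lemma iteratedDeriv_two_GP_add (hx : x ∈ Ioo (0 : ℝ) 1) (hf : ContDiffAt ℝ 2 f x) :
    iteratedDeriv 2 (fun x => GP x + f x) x =
      hessianRatio (iteratedDeriv 2 f) 1 x / (x * (1 - x)) := by
  have hx0 : x ≠ 0 := hx.1.ne'
  have hx1 : 1 - x ≠ 0 := (sub_pos.2 hx.2).ne'
  rw [iteratedDeriv_fun_add (contDiffAt_GP hx) hf, iteratedDeriv_two_GP, hessianRatio]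
  field_simp

lemma hessianRatio_rpow_neg_half (hx : x ∈ Ioo (0 : ℝ) 1) (hf : ContDiffAt ℝ 2 f x)
    (hpos : 0 < hessianRatio (iteratedDeriv 2 f) 1 x) :
    hessianRatio (iteratedDeriv 2 f) 1 x ^ (-(1 : ℝ) / 2) =
      (iteratedDeriv 2 GP x / iteratedDeriv 2 (fun x => GP x + f x) x) ^ ((1 : ℝ) / 2) := by
  have hx' : x * (1 - x) ≠ 0 := (mul_pos hx.1 (sub_pos.2 hx.2)).ne'
  rw [iteratedDeriv_two_GP, iteratedDeriv_two_GP_add hx hf, div_div_div_cancel_right₀ hx',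
    one_div, Real.inv_rpow hpos.le, neg_div, Real.rpow_neg hpos.le]

lemma Qnorm_GP_add_mul {s : ℝ} (hf : Differentiable ℝ f) (N : ℕ) (α : ℝ) :
    Qnorm (fun x => GP x + s * f x) N α = 2 * Real.pi * Real.exp (-N * GP α) *
      ∫ x in (0 : ℝ)..1, bernsteinWeight N α (Phase f α) s x := by
  rw [Qnorm, mul_assoc (2 * Real.pi),
    ← intervalIntegral.integral_const_mul (Real.exp (-N * GP α))]
  congr 1
  apply intervalIntegral.integral_congr_Ioo_of_le zero_le_one
  intro x hx
  have hderiv : deriv (fun x => GP x + s * f x) x =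
      Real.log x - Real.log (1 - x) + s * deriv f x := by
    rw [deriv_fun_add ((contDiffAt_GP hx).differentiableAt one_ne_zero)
      ((hf x).const_mul s), deriv_GP, deriv_const_mul _ (hf x)]
  simp only [Phase, hderiv, bernsteinWeight]
  rw [Real.rpow_def_of_pos hx.1, Real.rpow_def_of_pos (sub_pos.2 hx.2),
    ← Real.exp_add, ← Real.exp_add, ← Real.exp_add, GP, GP]
  ring_nf

end EntropyPotential

section Asymptotics

variable {K c : ℝ}

lemma exists_pos_le_hessianRatio {f : ℝ → ℝ} (hf : ContDiff ℝ 2 f)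
    (hpos : ∀ x ∈ Ioo (0 : ℝ) 1, 0 < iteratedDeriv 2 (fun x => GP x + f x) x) :
    ∃ c, 0 < c ∧ ∀ x ∈ Icc (0 : ℝ) 1, c ≤ hessianRatio (iteratedDeriv 2 f) 1 x := by
  have : Continuous (iteratedDeriv 2 f) := hf.continuous_iteratedDeriv 2 le_rfl
  refine isCompact_Icc.exists_forall_le' (by unfold hessianRatio; fun_prop) fun x hx => ?_
  obtain rfl | rfl | hx := eq_endpoints_or_mem_Ioo_of_mem_Icc hx
  · simp [hessianRatio]
  · simp [hessianRatio]
  · have h := hpos x hx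
    rwa [iteratedDeriv_two_GP_add hx hf.contDiffAt,
      div_pos_iff_of_pos_right (mul_pos hx.1 (sub_pos.2 hx.2))] at h

lemma exists_uniform_bounds_convexComb {f0 f1 : ℝ → ℝ} (hf0 : ContDiff ℝ 4 f0)
    (hf1 : ContDiff ℝ 4 f1)
    (hG0 : ∀ x ∈ Ioo (0 : ℝ) 1, 0 < iteratedDeriv 2 (fun x => GP x + f0 x) x)
    (hG1 : ∀ x ∈ Ioo (0 : ℝ) 1, 0 < iteratedDeriv 2 (fun x => GP x + f1 x) x) :
    ∃ K c, 0 < c ∧ ∀ t ∈ Icc (0 : ℝ) 1,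
      C2BoundedOn (Icc 0 1) K (iteratedDeriv 2 fun x => (1 - t) * f0 x + t * f1 x) ∧
      ∀ x ∈ Icc (0 : ℝ) 1,
        c ≤ hessianRatio (iteratedDeriv 2 fun x => (1 - t) * f0 x + t * f1 x) 1 x := by
  have hf0' : ContDiff ℝ 2 f0 := hf0.of_le (by norm_num)
  have hf1' : ContDiff ℝ 2 f1 := hf1.of_le (by norm_num)
  obtain ⟨c0, hc0, hc0le⟩ := exists_pos_le_hessianRatio hf0' hG0
  obtain ⟨c1, hc1, hc1le⟩ := exists_pos_le_hessianRatio hf1' hG1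
  obtain ⟨K0, hK0⟩ := C2BoundedOn.exists_of_contDiff (isCompact_Icc (a := (0 : ℝ)) (b := 1))
    (contDiff_iteratedDeriv_two hf0)
  obtain ⟨K1, hK1⟩ := C2BoundedOn.exists_of_contDiff (isCompact_Icc (a := (0 : ℝ)) (b := 1))
    (contDiff_iteratedDeriv_two hf1)
  refine ⟨K0 + K1, min c0 c1, lt_min hc0 hc1, fun t ht => ?_⟩
  have ht' : 0 ≤ 1 - t := sub_nonneg.2 ht.2
  have hderiv : iteratedDeriv 2 (fun x => (1 - t) * f0 x + t * f1 x) =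
      fun x => (1 - t) * iteratedDeriv 2 f0 x + t * iteratedDeriv 2 f1 x := funext fun x => by
    rw [iteratedDeriv_fun_add (contDiffAt_const.mul hf0'.contDiffAt)
      (contDiffAt_const.mul hf1'.contDiffAt), iteratedDeriv_const_mul_field,
      iteratedDeriv_const_mul_field]
  rw [hderiv]
  constructor
  · refine ((hK0.const_mul (1 - t)).add (hK1.const_mul t)).mono ?_
    rw [abs_of_nonneg ht', abs_of_nonneg ht.1]
    exact add_le_add
      (mul_le_of_le_one_left (hK0.bound_nonneg (left_mem_Icc.2 zero_le_one)) (by linarith [ht.1]))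
      (mul_le_of_le_one_left (hK1.bound_nonneg (left_mem_Icc.2 zero_le_one)) ht.2)
  · intro x hx
    calc min c0 c1 = (1 - t) * min c0 c1 + t * min c0 c1 := by ring
      _ ≤ (1 - t) * hessianRatio (iteratedDeriv 2 f0) 1 x +
          t * hessianRatio (iteratedDeriv 2 f1) 1 x := by
        have ht0 := ht.1
        gcongr
        · exact (min_le_left c0 c1).trans (hc0le x hx)
        · exact (min_le_right c0 c1).trans (hc1le x hx)
      _ = _ := by simp only [hessianRatio]; ring

theorem exists_abs_log_Qnorm_ratio_le (K : ℝ) (hc : 0 < c) :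
    ∃ A, 0 ≤ A ∧ ∀ f, ContDiff ℝ 4 f → C2BoundedOn (Icc 0 1) K (iteratedDeriv 2 f) →
      (∀ x ∈ Icc (0 : ℝ) 1, c ≤ hessianRatio (iteratedDeriv 2 f) 1 x) →
      ∀ N : ℕ, 1 ≤ N → ∀ α ∈ Icc (0 : ℝ) 1,
        0 < Qnorm (fun x => GP x + f x) N α / Qnorm GP N α ∧
        |Real.log (Qnorm (fun x => GP x + f x) N α / Qnorm GP N α) -
          -1 / 2 * Real.log (hessianRatio (iteratedDeriv 2 f) 1 α)| ≤ A / N := by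
  obtain ⟨B, hB⟩ := exists_C2BoundedOn_invHessian K hc
  refine ⟨20 * (|K| * B ^ 2), by positivity, fun f hf hK hcf N hN α hα => ?_⟩
  have hN0 : (0 : ℝ) < N := by exact_mod_cast hN
  have hφ : Continuous (Phase f α) := continuous_Phase (hf.of_le (by norm_num))
  have hJ (s : ℝ) : 0 < ∫ x in (0 : ℝ)..1, bernsteinWeight N α (Phase f α) s x :=
    integral_bernsteinWeight_pos hN0.le hα hφ
  have hQ (s : ℝ) := Qnorm_GP_add_mul (s := s) (hf.differentiable (by norm_num)) N α
  have hQ1 := hQ 1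
  have hQ0 := hQ 0
  simp only [one_mul, zero_mul, add_zero] at hQ1 hQ0
  change Qnorm GP N α = _ at hQ0
  rw [hQ1, hQ0, mul_div_mul_left _ _ (by positivity), Real.log_div (hJ 1).ne' (hJ 0).ne',
    abs_of_nonneg (hK.bound_nonneg hα)]
  refine ⟨div_pos (hJ 1) (hJ 0), ?_⟩
  convert abs_log_integral_bernsteinWeight_add_le hN0 hα hf hK
    (fun x hx => hc.trans_le (hcf x hx)) (hB _ hK hcf) using 2
  ring

lemma abs_exp_sub_exp_le {x y R : ℝ} (hx : x ≤ R) (hy : y ≤ R) :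
    |Real.exp x - Real.exp y| ≤ Real.exp R * |x - y| :=
  (convex_Iic R).norm_image_sub_le_of_norm_hasDerivWithin_le
    (fun z _ => (Real.hasDerivAt_exp z).hasDerivWithinAt)
    (fun z hz => by simpa using hz) hy hx

theorem exists_Qnorm_ratio_bounds (K : ℝ) (hc : 0 < c) :
    ∃ C, 0 < C ∧ ∀ f, ContDiff ℝ 4 f → C2BoundedOn (Icc 0 1) K (iteratedDeriv 2 f) →
      (∀ x ∈ Icc (0 : ℝ) 1, c ≤ hessianRatio (iteratedDeriv 2 f) 1 x) →
      ∀ N : ℕ, 1 ≤ N → ∀ α ∈ Icc (0 : ℝ) 1,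
        1 / C ≤ Qnorm (fun x => GP x + f x) N α / Qnorm GP N α ∧
        Qnorm (fun x => GP x + f x) N α / Qnorm GP N α ≤ C ∧
        |Qnorm (fun x => GP x + f x) N α / Qnorm GP N α -
          hessianRatio (iteratedDeriv 2 f) 1 α ^ (-(1 : ℝ) / 2)| ≤ C / N := by
  obtain ⟨A, hA, hlog⟩ := exists_abs_log_Qnorm_ratio_le K hc
  set L := max |Real.log c| |Real.log (1 + 8 * K)|
  set R := L + A
  refine ⟨Real.exp R * (1 + A), by positivity, fun f hf hK hcf N hN α hα => ?_⟩
  obtain ⟨hq, hqlog⟩ := hlog f hf hK hcf N hN α hα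
  set q := Qnorm (fun x => GP x + f x) N α / Qnorm GP N α
  set h := hessianRatio (iteratedDeriv 2 f) 1 α
  have hh : 0 < h := hc.trans_le (hcf α hα)
  have hhL : |Real.log h| ≤ L := abs_le_max_abs_abs (Real.log_le_log hc (hcf α hα))
    (Real.log_le_log hh ((le_abs_self _).trans ((hK.hessianRatio (by simp)).abs_le hα)))
  have hAN : A / N ≤ A := div_le_self hA (by exact_mod_cast hN)
  have hL := abs_le.1 hhL
  have hqA := abs_le.1 (hqlog.trans hAN)
  have hqR : -R ≤ Real.log q ∧ Real.log q ≤ R := by constructor <;> linarith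
  have hexp : Real.exp R ≤ Real.exp R * (1 + A) :=
    le_mul_of_one_le_right (Real.exp_pos R).le (by linarith)
  refine ⟨?_, ?_, ?_⟩
  · calc 1 / (Real.exp R * (1 + A)) ≤ 1 / Real.exp R := by gcongr
      _ = Real.exp (-R) := by rw [Real.exp_neg, one_div]
      _ ≤ q := (Real.le_log_iff_exp_le hq).1 hqR.1
  · exact ((Real.log_le_iff_le_exp hq).1 hqR.2).trans hexp
  · rw [Real.rpow_def_of_pos hh, mul_comm (Real.log h), neg_div, ← neg_div]
    nth_rw 1 [← Real.exp_log hq]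
    calc _ ≤ Real.exp R * |Real.log q - -1 / 2 * Real.log h| :=
          abs_exp_sub_exp_le hqR.2 (by linarith)
      _ ≤ Real.exp R * (A / N) := by gcongr
      _ ≤ Real.exp R * (1 + A) / N := by
          rw [mul_div_assoc]
          gcongr
          linarith

theorem bergman_cp1_interior_asymptotics_of_q_general
    (f0 f1 : ℝ → ℝ) (hf0 : ContDiff ℝ 4 f0) (hf1 : ContDiff ℝ 4 f1)
    (hG0 : ∀ x ∈ Ioo (0 : ℝ) 1, 0 < iteratedDeriv 2 (Gt f0 f1 0) x)
    (hG1 : ∀ x ∈ Ioo (0 : ℝ) 1, 0 < iteratedDeriv 2 (Gt f0 f1 1) x) :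
    ∃ C : ℝ, 0 < C ∧
      ∀ N : ℕ, 1 ≤ N → ∀ t ∈ Icc (0 : ℝ) 1, ∀ α ∈ Icc (0 : ℝ) 1,
        1 / C ≤ Qnorm (Gt f0 f1 t) N α / Qnorm GP N α ∧
        Qnorm (Gt f0 f1 t) N α / Qnorm GP N α ≤ C ∧
        |Qnorm (Gt f0 f1 t) N α / Qnorm GP N α -
            (1 + α * (1 - α) *
              iteratedDeriv 2 (fun x => (1 - t) * f0 x + t * f1 x) α) ^ (-(1 : ℝ) / 2)|
          ≤ C / N ∧
        (α ∈ Ioo (0 : ℝ) 1 →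
          (1 + α * (1 - α) *
              iteratedDeriv 2 (fun x => (1 - t) * f0 x + t * f1 x) α) ^ (-(1 : ℝ) / 2) =
            (iteratedDeriv 2 GP α / iteratedDeriv 2 (Gt f0 f1 t) α) ^ ((1 : ℝ) / 2)) := by
  have hGt0 : Gt f0 f1 0 = fun x => GP x + f0 x := by ext; simp [Gt]
  have hGt1 : Gt f0 f1 1 = fun x => GP x + f1 x := by ext; simp [Gt]
  obtain ⟨K, c, hc, hKc⟩ := exists_uniform_bounds_convexComb hf0 hf1 (hGt0 ▸ hG0) (hGt1 ▸ hG1)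
  obtain ⟨C, hC, hbounds⟩ := exists_Qnorm_ratio_bounds K hc
  refine ⟨C, hC, fun N hN t ht α hα => ?_⟩
  have hf : ContDiff ℝ 4 fun x => (1 - t) * f0 x + t * f1 x := by fun_prop
  obtain ⟨hK, hcf⟩ := hKc t ht
  obtain ⟨hlower, hupper, hdiff⟩ := hbounds _ hf hK hcf N hN α hα
  rw [← hessianRatio_one_left]
  exact ⟨hlower, hupper, hdiff, fun hα' =>
    hessianRatio_rpow_neg_half hα' (hf.of_le (by norm_num)).contDiffAt (hc.trans_le (hcf α hα))⟩

end Asymptotics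

theorem bergman_cp1_interior_asymptotics_of_q
    (f0 f1 : ℝ → ℝ) (hf0 : ContDiff ℝ (⊤ : ℕ∞) f0) (hf1 : ContDiff ℝ (⊤ : ℕ∞) f1)
    (hG0 : ∀ x ∈ Set.Ioo (0:ℝ) 1, 0 < iteratedDeriv 2 (Gt f0 f1 0) x)
    (hG1 : ∀ x ∈ Set.Ioo (0:ℝ) 1, 0 < iteratedDeriv 2 (Gt f0 f1 1) x) :
    ∃ C : ℝ, 0 < C ∧
      ∀ N : ℕ, 1 ≤ N → ∀ t ∈ Set.Icc (0:ℝ) 1, ∀ α : ℝ,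
        (N : ℝ) ^ (-(3:ℝ)/4) ≤ α → α ≤ 2/3 →
        1 / C ≤ Qnorm (Gt f0 f1 t) N α / Qnorm GP N α ∧
        Qnorm (Gt f0 f1 t) N α / Qnorm GP N α ≤ C ∧
        |Qnorm (Gt f0 f1 t) N α / Qnorm GP N α -
            (1 + α * (1 - α) *
              iteratedDeriv 2 (fun x => (1 - t) * f0 x + t * f1 x) α) ^ (-(1:ℝ)/2)|
          ≤ C / ((N:ℝ) * α) ∧
        (1 + α * (1 - α) *
            iteratedDeriv 2 (fun x => (1 - t) * f0 x + t * f1 x) α) ^ (-(1:ℝ)/2) =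
          (iteratedDeriv 2 GP α / iteratedDeriv 2 (Gt f0 f1 t) α) ^ ((1:ℝ)/2) := by
  obtain ⟨C, hC, h⟩ := bergman_cp1_interior_asymptotics_of_q_general f0 f1
    (contDiff_infty.1 hf0 4) (contDiff_infty.1 hf1 4) hG0 hG1
  refine ⟨C, hC, fun N hN t ht α hNα hα => ?_⟩
  have hN0 : (0 : ℝ) < N := by exact_mod_cast hN
  have hα0 : 0 < α := (Real.rpow_pos_of_pos hN0 _).trans_le hNα
  have hα1 : α < 1 := by linarith
  obtain ⟨hlower, hupper, hdiff, heq⟩ := h N hN t ht α ⟨hα0.le, hα1.le⟩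
  exact ⟨hlower, hupper, hdiff.trans
    (div_le_div_of_nonneg_left hC.le (mul_pos hN0 hα0) (mul_le_of_le_one_right hN0.le hα1.le)),
    heq ⟨hα0, hα1⟩⟩
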